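/- Let X be a first countable, regular Hausdorff (T3) topological space which is almost discretely Lindelöf. Then the cardinality of X is at most 2^ℵ₀ (the continuum). -/

import Mathlib

open Cardinal Set Filter Topology

/-- A topological space is *almost discretely Lindelöf* if every subset that is
discrete in the subspace topology is contained in a Lindelöf subspace. -/
def AlmostDiscretelyLindelof (X : Type*) [TopologicalSpace X] : Prop :=
  ∀ D : Set X, DiscreteTopology D → ∃ Y : Set X, D ⊆ Y ∧ IsLindelof Y

/-!
A first countable Hausdorff space `X` contains closed sets `M` of size at most `𝔠` that are closed
off under prescribed countable operations, and one shows `M = X`. When `X` is Lindelöf, a point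
`p ∉ M` gives a countable cover of `M` by basic neighbourhoods that miss `p`; if `M` was built to
contain a point outside each countable union of such sets that is not all of `X`, this is absurd.
Hence `|X| ≤ 𝔠` (Arhangelskii).

In the almost discretely Lindelöf case this bounds all discrete subsets, and therefore their
closures, by `𝔠`. A lemma of Shapirovskii then writes each closed set as an intersection of at most
`𝔠` open sets, which replace the basic neighbourhoods in the closing off. If `p ∉ M`, every
countable `A ⊆ M` has an open `g A ⊇ closure A` with `p ∉ g A`, and no countable family of these
covers `M`. Picking points of `M` outside `g A` for every initial segment `A` of the points already
picked yields a free sequence of length `ω₁`. Its range is discrete, so it lies in a Lindelöf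
subspace, which is impossible: by first countability and freeness each point of `X` has a
neighbourhood containing only countably many terms.
-/

universe u v

section ClosingOff

variable {X : Type u} {κ : Cardinal.{u}}

theorem exists_subset_range_of_mk_le {ι : Type u} [Nonempty X] {A : Set X} (hA : #A ≤ #ι) :
    ∃ f : ι → X, A ⊆ range f := by
  obtain ⟨e⟩ := hA
  refine ⟨Function.extend e Subtype.val fun _ ↦ Classical.arbitrary X, fun x hx ↦ ⟨e ⟨x, hx⟩, ?_⟩⟩
  exact e.injective.extend_apply _ _ _

theorem mk_wType_countable_arity_le (h𝔠 : 𝔠 ≤ κ) (hκ : κ ^ ℵ₀ ≤ κ) :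
    #(WType fun a : κ.out × Set ℕ ↦ a.2) ≤ κ := by
  have hκ₀ : ℵ₀ ≤ κ := aleph0_le_continuum.trans h𝔠
  have power_le (a : κ.out × Set ℕ) : κ ^ lift.{u} #a.2 ≤ κ :=
    (power_le_power_left (aleph0_pos.trans_le hκ₀).ne' (by simp)).trans hκ
  refine WType.cardinalMk_le_of_le' ((sum_le_sum _ _ power_le).trans ?_)
  calc sum (fun _ : κ.out × Set ℕ ↦ κ) = κ * 𝔠 * κ := by simp
    _ ≤ κ := by rw [mul_eq_left hκ₀ h𝔠 continuum_ne_zero, mul_eq_self hκ₀]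

theorem exists_mk_le_closedUnder_countable (h𝔠 : 𝔠 ≤ κ) (hκ : κ ^ ℵ₀ ≤ κ)
    {c : Set X → Set X} (hc : ∀ A, A.Countable → #(c A) ≤ κ) :
    ∃ M : Set X, #M ≤ κ ∧ ∀ A ⊆ M, A.Countable → c A ⊆ M := by
  rcases isEmpty_or_nonempty X with hX | hX
  · exact ⟨Set.univ, by simp, fun _ _ _ ↦ subset_univ _⟩
  have exists_enum (A : Set X) (hA : A.Countable) : ∃ f : κ.out → X, c A ⊆ range f :=
    exists_subset_range_of_mk_le ((hc A hA).trans_eq (mk_out κ).symm)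
  choose! enum subset_range_enum using exists_enum
  -- A well-founded tree is a term: its root `(j, S)` names the `j`-th element of `c A`, where `A`
  -- is the set of values of the subtrees, which are indexed by `S`.
  let eval : WType (fun a : κ.out × Set ℕ ↦ a.2) → X :=
    WType.elim X fun t ↦ enum (range t.2) t.1.1
  refine ⟨range eval, mk_range_le.trans (mk_wType_countable_arity_le h𝔠 hκ), ?_⟩
  intro A hAM hA y hy
  obtain ⟨j, rfl⟩ := subset_range_enum A hA hy
  choose tree eval_tree using fun a : A ↦ hAM a.2
  have : Countable A := hA
  obtain ⟨code, code_injective⟩ := exists_injective_nat A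
  let decode := (Equiv.ofInjective code code_injective).symm
  refine ⟨WType.mk (j, range code) (tree ∘ decode), ?_⟩
  have range_eval : range (fun n ↦ eval (tree (decode n))) = A := by
    simp only [eval_tree]
    exact (decode.surjective.range_comp _).trans Subtype.range_coe
  change enum (range fun n ↦ eval (tree (decode n))) j = enum A j
  rw [range_eval]

theorem mk_biUnion_powerset_le {Y : Type u} (h𝔠 : 𝔠 ≤ κ) {𝒪 : Set X → Set Y}
    (h𝒪 : ∀ A, A.Countable → #(𝒪 A) ≤ κ) {A : Set X} (hA : A.Countable) :
    #(⋃ B ∈ 𝒫 A, 𝒪 B) ≤ κ :=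
  calc #(⋃ B ∈ 𝒫 A, 𝒪 B) ≤ #(𝒫 A) * ⨆ B : 𝒫 A, #(𝒪 B) := mk_biUnion_le _ _
    _ ≤ κ * κ := by
      gcongr
      · rw [mk_powerset]
        refine le_trans ?_ h𝔠
        rw [← two_power_aleph0]
        exact power_le_power_left two_ne_zero hA.le_aleph0
      · exact ciSup_le' fun B ↦ h𝒪 B (hA.mono B.2)
    _ = κ := mul_eq_self (aleph0_le_continuum.trans h𝔠)

end ClosingOff

section Reflection

theorem isClosed_of_forall_countable_closure_subset
    {X : Type*} [TopologicalSpace X] [FirstCountableTopology X] {M : Set X}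
    (hM : ∀ A ⊆ M, A.Countable → closure A ⊆ M) : IsClosed M := by
  refine isClosed_of_closure_subset fun x hx ↦ ?_
  obtain ⟨s, hsM, hs⟩ := mem_closure_iff_seq_limit.1 hx
  exact hM (range s) (range_subset_iff.2 hsM) (countable_range s)
    (mem_closure_of_tendsto hs (Eventually.of_forall mem_range_self))

variable {X : Type u} [TopologicalSpace X] [T2Space X] [FirstCountableTopology X] {κ : Cardinal.{u}}

theorem mk_closure_le_mk_power_aleph0 (A : Set X) : #(closure A) ≤ #A ^ ℵ₀ := by
  have exists_seq (x : closure A) : ∃ s : ℕ → A, Tendsto (fun n ↦ (s n : X)) atTop (𝓝 x) := by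
    obtain ⟨s, hsA, hs⟩ := mem_closure_iff_seq_limit.1 x.2
    exact ⟨fun n ↦ ⟨s n, hsA n⟩, hs⟩
  choose s hs using exists_seq
  have s_injective : Function.Injective s := fun x y hxy ↦
    Subtype.ext (tendsto_nhds_unique (hs x) (hxy ▸ hs y))
  simpa using mk_le_of_injective s_injective

theorem mk_closure_le (hκ : κ ^ ℵ₀ ≤ κ) {A : Set X} (hA : #A ≤ κ) : #(closure A) ≤ κ :=
  (mk_closure_le_mk_power_aleph0 A).trans ((power_le_power_right hA).trans hκ)

theorem exists_isClosed_mk_le_reflecting_covers (h𝔠 : 𝔠 ≤ κ) (hκ : κ ^ ℵ₀ ≤ κ)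
    {𝒪 : Set X → Set (Set X)} (h𝒪 : ∀ A, A.Countable → #(𝒪 A) ≤ κ) :
    ∃ M : Set X, IsClosed M ∧ #M ≤ κ ∧
      ∀ 𝒲 : Set (Set X), 𝒲.Countable → (∀ W ∈ 𝒲, ∃ A ⊆ M, A.Countable ∧ W ∈ 𝒪 A) →
        M ⊆ ⋃₀ 𝒲 → ⋃₀ 𝒲 = Set.univ := by
  rcases isEmpty_or_nonempty X with hX | hX
  · exact ⟨Set.univ, isClosed_univ, by simp, fun _ _ _ h ↦ univ_subset_iff.1 h⟩
  have hκ₀ : ℵ₀ ≤ κ := aleph0_le_continuum.trans h𝔠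
  have exists_notMem (W : Set X) : W ≠ Set.univ → ∃ x, x ∉ W := (ne_univ_iff_exists_notMem W).1
  choose! pick pick_notMem using exists_notMem
  let 𝒰 (A : Set X) : Set (Set X) := ⋃ B ∈ 𝒫 A, 𝒪 B
  let picks (A : Set X) : Set X :=
    range fun 𝒲 : {𝒲 : Set (Set X) // 𝒲 ⊆ 𝒰 A ∧ #𝒲 ≤ ℵ₀} ↦ pick (⋃₀ 𝒲.1)
  have mk_picks_le (A : Set X) (hA : A.Countable) : #(picks A) ≤ κ :=
    calc #(picks A) ≤ max #(𝒰 A) ℵ₀ ^ ℵ₀ := mk_range_le.trans (mk_bounded_subset_le _ _)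
      _ ≤ κ ^ ℵ₀ := power_le_power_right (max_le (mk_biUnion_powerset_le h𝔠 h𝒪 hA) hκ₀)
      _ ≤ κ := hκ
  obtain ⟨M, hMκ, hM⟩ := exists_mk_le_closedUnder_countable h𝔠 hκ
    (c := fun A ↦ closure A ∪ picks A) fun A hA ↦ (mk_union_le _ _).trans <|
      add_le_of_le hκ₀ (mk_closure_le hκ (hA.le_aleph0.trans hκ₀)) (mk_picks_le A hA)
  refine ⟨M, isClosed_of_forall_countable_closure_subset fun A hAM hA ↦
    subset_union_left.trans (hM A hAM hA), hMκ, fun 𝒲 h𝒲 hW hcover ↦ ?_⟩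
  by_contra hne
  choose! A hAM hA hWA using hW
  have pick_mem : pick (⋃₀ 𝒲) ∈ picks (⋃ W ∈ 𝒲, A W) :=
    ⟨⟨𝒲, fun W hW ↦ mem_biUnion (subset_biUnion_of_mem hW) (hWA W hW), h𝒲.le_aleph0⟩, rfl⟩
  exact pick_notMem _ hne <| hcover <|
    hM _ (iUnion₂_subset hAM) (h𝒲.biUnion hA) (subset_union_right pick_mem)

theorem mk_le_continuum_of_lindelofSpace [LindelofSpace X] : #X ≤ 𝔠 := by
  choose B hB using fun x : X ↦ (𝓝 x).exists_antitone_basis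
  obtain ⟨M, hMclosed, hMκ, hM⟩ := exists_isClosed_mk_le_reflecting_covers (X := X) le_rfl
    continuum_power_aleph0.le (𝒪 := fun A ↦ ⋃ x ∈ A, range (B x)) fun A hA ↦
      (hA.biUnion fun x _ ↦ countable_range (B x)).le_aleph0.trans aleph0_le_continuum
  suffices M = Set.univ by rwa [this, mk_univ] at hMκ
  refine eq_univ_of_forall fun p ↦ by_contra fun hp ↦ ?_
  have exists_basic_notMem (x : X) (hx : x ∈ M) : ∃ n, p ∉ B x n := by
    have hxp : x ≠ p := fun h ↦ hp (h ▸ hx)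
    obtain ⟨n, hn⟩ := (hB x).mem_iff.1 (compl_singleton_mem_nhds hxp)
    exact ⟨n, fun hpn ↦ hn hpn rfl⟩
  choose! n hpn using exists_basic_notMem
  obtain ⟨t, ht, htM, hcover⟩ := hMclosed.isLindelof.elim_nhds_subcover (fun x ↦ B x (n x))
    fun x _ ↦ (hB x).mem (n x)
  have cover_eq_univ := hM ((fun x ↦ B x (n x)) '' t) (ht.image _)
    (forall_mem_image.2 fun x hx ↦ ⟨{x}, singleton_subset_iff.2 (htM x hx), countable_singleton x,
      mem_biUnion rfl (mem_range_self _)⟩) (by rwa [sUnion_image])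
  obtain ⟨_, ⟨x, hx, rfl⟩, hpx⟩ := cover_eq_univ ▸ mem_univ p
  exact hpn x (htM x hx) hpx

end Reflection

section Discrete

variable {X : Type*} [TopologicalSpace X]

theorem discreteTopology_range_of_notMem_closure {ι : Type*} [LinearOrder ι] {x : ι → X}
    (hIio : ∀ i, x i ∉ closure (x '' Iio i)) (hIoi : ∀ i, x i ∉ closure (x '' Ioi i)) :
    DiscreteTopology (range x) := by
  refine discreteTopology_subtype_iff'.2 (forall_mem_range.2 fun i ↦ ?_)
  refine ⟨(closure (x '' Iio i))ᶜ ∩ (closure (x '' Ioi i))ᶜ,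
    isClosed_closure.isOpen_compl.inter isClosed_closure.isOpen_compl, ?_⟩
  refine subset_antisymm ?_ (singleton_subset_iff.2 ⟨⟨hIio i, hIoi i⟩, mem_range_self i⟩)
  rintro _ ⟨⟨hj_Iio, hj_Ioi⟩, j, rfl⟩
  rcases lt_trichotomy j i with hji | rfl | hij
  · exact absurd (subset_closure (mem_image_of_mem x (mem_Iio.2 hji))) hj_Iio
  · rfl
  · exact absurd (subset_closure (mem_image_of_mem x (mem_Ioi.2 hij))) hj_Ioi

theorem exists_discreteTopology_subset_closure_union_biUnion {S : Set X} {V : X → Set X}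
    (hVopen : ∀ x ∈ S, IsOpen (V x)) (hV : ∀ x ∈ S, x ∈ V x) :
    ∃ D ⊆ S, DiscreteTopology D ∧ S ⊆ closure D ∪ ⋃ x ∈ D, V x := by
  obtain ⟨_, hwf⟩ := exists_wellFoundedLT X
  let step (x : X) (earlier : (y : X) → y < x → Prop) : Prop :=
    x ∈ S ∧ x ∉ closure {y | ∃ h : y < x, earlier y h} ∧ ∀ y, ∀ h : y < x, earlier y h → x ∉ V y
  let D : Set X := {x | hwf.wf.fix step x}
  have mem_D_iff (x : X) :
      x ∈ D ↔ x ∈ S ∧ x ∉ closure {y | y < x ∧ y ∈ D} ∧ ∀ y, y < x → y ∈ D → x ∉ V y := by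
    change hwf.wf.fix step x ↔ _
    rw [hwf.wf.fix_eq]
    simp only [step, exists_prop]
    rfl
  refine ⟨D, fun x hx ↦ ((mem_D_iff x).1 hx).1, ?_, fun x hx ↦ ?_⟩
  · rw [← Subtype.range_coe (s := D)]
    refine discreteTopology_range_of_notMem_closure (fun x ↦ ?_) fun x ↦ ?_
    · convert ((mem_D_iff x).1 x.2).2.1 using 3
      ext y
      exact ⟨fun ⟨z, hzx, hzy⟩ ↦ hzy ▸ ⟨hzx, z.2⟩, fun ⟨hyx, hyD⟩ ↦ ⟨⟨y, hyD⟩, hyx, rfl⟩⟩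
    · have hxS : (x : X) ∈ S := ((mem_D_iff x).1 x.2).1
      refine fun hcl ↦ ?_
      obtain ⟨_, hyV, y, hxy, rfl⟩ := mem_closure_iff.1 hcl (V x) (hVopen x hxS) (hV x hxS)
      exact ((mem_D_iff y).1 y.2).2.2 x hxy x.2 hyV
  · by_contra hcon
    simp only [mem_union, mem_iUnion, not_or, not_exists] at hcon
    refine hcon.1 (subset_closure ((mem_D_iff x).2 ⟨hx, fun h ↦ ?_, fun y _ hy ↦ hcon.2 y hy⟩))
    exact hcon.1 (closure_mono (fun y hy ↦ hy.2) h)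

end Discrete

section FreeSequence

variable {X : Type u} {Ω : Type v} [TopologicalSpace X] [LinearOrder Ω]

/-- A *free sequence*: a family indexed by a linear order (a well-order in practice) each of whose
initial segments has closure disjoint from the closure of the complementary final segment. -/
def IsFreeSequence (x : Ω → X) : Prop :=
  ∀ i, Disjoint (closure (x '' Iio i)) (closure (x '' Ici i))

namespace IsFreeSequence

variable {x : Ω → X}

theorem discreteTopology_range [WellFoundedLT Ω] (hx : IsFreeSequence x) :
    DiscreteTopology (range x) := by
  refine discreteTopology_range_of_notMem_closure (fun i hi ↦ ?_) fun i hi ↦ ?_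
  · exact (hx i).notMem_of_mem_left hi (subset_closure (mem_image_of_mem x self_mem_Ici))
  · obtain hempty | ⟨k, hk⟩ := (isUpperSet_Ioi i).eq_empty_or_Ici
    · simp [hempty] at hi
    · have hik : i < k := by simpa [← hk] using self_mem_Ici (a := k)
      exact (hx k).notMem_of_mem_left (subset_closure (mem_image_of_mem x hik)) (hk ▸ hi)

theorem exists_notMem_closure_image_Ici [FirstCountableTopology X] [Uncountable Ω]
    (hΩ : ∀ i : Ω, (Iic i).Countable) (hx : IsFreeSequence x) (q : X) :
    ∃ j, q ∉ closure (x '' Ici j) := by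
  by_contra! hq
  obtain ⟨i₀⟩ : Nonempty Ω := inferInstance
  obtain ⟨s, hs, hsq⟩ := mem_closure_iff_seq_limit.1 (hq i₀)
  choose t _ htx using hs
  have exists_bound : ∃ j, ∀ n, t n < j := by
    by_contra! hcofinal
    have univ_subset : (Set.univ : Set Ω) ⊆ ⋃ n, Iic (t n) := fun j _ ↦ mem_iUnion.2 (hcofinal j)
    exact not_countable_univ ((countable_iUnion fun n ↦ hΩ (t n)).mono univ_subset)
  obtain ⟨j, hj⟩ := exists_bound
  have hqj : q ∈ closure (x '' Iio j) :=
    mem_closure_of_tendsto hsq (Eventually.of_forall fun n ↦ ⟨t n, hj n, htx n⟩)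
  exact (hx j).notMem_of_mem_left hqj (hq j)

theorem not_range_subset_of_isLindelof [FirstCountableTopology X] [Uncountable Ω]
    (hΩ : ∀ i : Ω, (Iic i).Countable) (hx : IsFreeSequence x) {Y : Set X} (hY : IsLindelof Y) :
    ¬ range x ⊆ Y := by
  intro hxY
  choose j hj using hx.exists_notMem_closure_image_Ici hΩ
  obtain ⟨t, ht, -, hcover⟩ := hY.elim_nhds_subcover (fun q ↦ (closure (x '' Ici (j q)))ᶜ)
    fun q _ ↦ isClosed_closure.isOpen_compl.mem_nhds (hj q)
  have univ_subset : (Set.univ : Set Ω) ⊆ ⋃ q ∈ t, Iic (j q) := by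
    intro i _
    obtain ⟨q, hqt, hiq⟩ := mem_iUnion₂.1 (hcover (hxY (mem_range_self i)))
    refine mem_biUnion hqt (le_of_not_ge fun hji ↦ ?_)
    exact hiq (subset_closure (mem_image_of_mem x hji))
  exact not_countable_univ ((ht.biUnion fun q _ ↦ hΩ (j q)).mono univ_subset)

end IsFreeSequence

theorem AlmostDiscretelyLindelof.not_isFreeSequence [FirstCountableTopology X] [WellFoundedLT Ω]
    [Uncountable Ω] (hX : AlmostDiscretelyLindelof X) (hΩ : ∀ i : Ω, (Iic i).Countable)
    (x : Ω → X) : ¬ IsFreeSequence x := by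
  intro hx
  obtain ⟨Y, hxY, hY⟩ := hX (range x) hx.discreteTopology_range
  exact hx.not_range_subset_of_isLindelof hΩ hY hxY

theorem isFreeSequence_of_notMem {x : Ω → X} {g : Set X → Set X}
    (hgopen : ∀ i, IsOpen (g (x '' Iio i))) (hg : ∀ i, closure (x '' Iio i) ⊆ g (x '' Iio i))
    (hx : ∀ i, ∀ k ≤ i, x i ∉ g (x '' Iio k)) : IsFreeSequence x := by
  intro k
  have disjoint_g : Disjoint (g (x '' Iio k)) (x '' Ici k) :=
    disjoint_right.2 (forall_mem_image.2 fun i hki ↦ hx i k hki)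
  exact (disjoint_g.closure_right (hgopen k)).mono_left (hg k)

end FreeSequence

theorem exists_seq_notMem_initial_segments {X : Type u} {Ω : Type v} [LinearOrder Ω]
    [WellFoundedLT Ω] (hΩ : ∀ i : Ω, (Iic i).Countable) {M : Set X} {g : Set X → Set X}
    (hM : ∀ 𝒜 : Set (Set X), 𝒜.Countable → (∀ A ∈ 𝒜, A ⊆ M ∧ A.Countable) →
      ∃ y ∈ M, ∀ A ∈ 𝒜, y ∉ g A) :
    ∃ x : Ω → X, (∀ i, x i ∈ M) ∧ ∀ i, ∀ k ≤ i, x i ∉ g (x '' Iio k) := by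
  have : Nonempty X := (hM ∅ countable_empty (by simp)).nonempty
  choose! newPoint newPoint_mem newPoint_notMem using hM
  let step (i : Ω) (earlier : (j : Ω) → j < i → X) : X :=
    newPoint {A | ∃ k, ∃ hk : k ≤ i, A = {y | ∃ j, ∃ hj : j < k, earlier j (hj.trans_le hk) = y}}
  let x : Ω → X := wellFounded_lt.fix step
  have x_eq (i : Ω) : x i = newPoint ((fun k ↦ x '' Iio k) '' Iic i) := by
    have x_eq_step : x i = step i fun j _ ↦ x j := wellFounded_lt.fix_eq step i
    rw [x_eq_step]
    simp only [step, Set.image, mem_Iio, mem_Iic, exists_prop, eq_comm]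
  have countable_segments (i : Ω) : ((fun k ↦ x '' Iio k) '' Iic i).Countable := (hΩ i).image _
  have segment_countable (k : Ω) : (x '' Iio k).Countable :=
    ((hΩ k).mono Iio_subset_Iic_self).image x
  have x_mem (i : Ω) : x i ∈ M := by
    induction i using WellFoundedLT.induction with
    | _ i ih =>
      rw [x_eq]
      refine newPoint_mem _ (countable_segments i)
        (forall_mem_image.2 fun k hk ↦ ⟨?_, segment_countable k⟩)
      exact image_subset_iff.2 fun j hj ↦ ih j (hj.trans_le hk)
  refine ⟨x, x_mem, fun i k hki ↦ ?_⟩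
  rw [x_eq i]
  exact newPoint_notMem _ (countable_segments i) (forall_mem_image.2 fun k _ ↦
    ⟨image_subset_iff.2 fun j _ ↦ x_mem j, segment_countable k⟩) _ (mem_image_of_mem _ hki)

theorem exists_uncountable_wellOrder_countable_Iic :
    ∃ (Ω : Type) (_ : LinearOrder Ω), WellFoundedLT Ω ∧ Uncountable Ω ∧
      ∀ i : Ω, (Iic i).Countable := by
  refine ⟨(ℵ₁).ord.ToType, inferInstance, inferInstance, ?_, fun i ↦ ?_⟩
  · rw [← aleph0_lt_mk_iff, mk_ord_toType]
    exact aleph0_lt_aleph_one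
  · have mk_Iio_lt_aleph_one : #(Iio i) < ℵ₁ := by simpa using mk_Iio_lt i
    have countable_Iio : (Iio i).Countable := le_aleph0_iff_set_countable.1 <|
      Order.lt_succ_iff.1 (mk_Iio_lt_aleph_one.trans_eq succ_aleph0.symm)
    rw [← Iio_insert]
    exact countable_Iio.insert i

section Pseudocharacter

variable {X : Type u} [TopologicalSpace X] {κ : Cardinal.{u}}

/-- The *pseudocharacter* of the set `F` is at most `κ`: some family of at most `κ` open sets has
intersection exactly `F`. -/
def HasPseudocharacterLE (F : Set X) (κ : Cardinal.{u}) : Prop :=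
  ∃ 𝒪 : Set (Set X), #𝒪 ≤ κ ∧ (∀ U ∈ 𝒪, IsOpen U) ∧ ⋂₀ 𝒪 = F

theorem hasPseudocharacterLE_of_isClosed [T3Space X] (hκ : ℵ₀ ≤ κ)
    (hX : ∀ D : Set X, DiscreteTopology D → #(closure D) ≤ κ) {F : Set X} (hF : IsClosed F) :
    HasPseudocharacterLE F κ := by
  have exists_nhd (x : X) (hx : x ∈ Fᶜ) : ∃ V, IsOpen V ∧ x ∈ V ∧ closure V ⊆ Fᶜ := by
    obtain ⟨V, ⟨hxV, hV⟩, hVF⟩ :=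
      (hasBasis_opens_closure x).mem_iff.1 (hF.isOpen_compl.mem_nhds hx)
    exact ⟨V, hV, hxV, hVF⟩
  choose! V hVopen hxV hVF using exists_nhd
  obtain ⟨D, hDF, hD, hcover⟩ := exists_discreteTopology_subset_closure_union_biUnion hVopen hxV
  refine ⟨(fun x ↦ (closure (V x))ᶜ) '' D ∪ (fun x ↦ {x}ᶜ) '' (closure D \ F), ?_, ?_, ?_⟩
  · refine (mk_union_le _ _).trans (add_le_of_le hκ ?_ ?_)
    · exact mk_image_le.trans ((mk_le_mk_of_subset subset_closure).trans (hX D hD))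
    · exact mk_image_le.trans ((mk_le_mk_of_subset sdiff_subset).trans (hX D hD))
  · rintro _ (⟨x, -, rfl⟩ | ⟨x, -, rfl⟩)
    · exact isClosed_closure.isOpen_compl
    · exact isOpen_compl_singleton
  · refine subset_antisymm (fun p hp ↦ by_contra fun hpF ↦ ?_) (subset_sInter ?_)
    · rcases hcover hpF with hpD | hpV
      · exact hp {p}ᶜ (Or.inr ⟨p, ⟨hpD, hpF⟩, rfl⟩) rfl
      · obtain ⟨x, hxD, hpx⟩ := mem_iUnion₂.1 hpV
        exact hp _ (Or.inl ⟨x, hxD, rfl⟩) (subset_closure hpx)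
    · rintro _ (⟨x, hxD, rfl⟩ | ⟨x, hx, rfl⟩)
      · exact subset_compl_comm.1 (hVF x (hDF hxD))
      · exact subset_compl_singleton_iff.2 hx.2

theorem mk_le_of_not_isFreeSequence [T2Space X] [FirstCountableTopology X]
    {Ω : Type v} [LinearOrder Ω] [WellFoundedLT Ω] (hΩ : ∀ i : Ω, (Iic i).Countable)
    (hfree : ∀ x : Ω → X, ¬ IsFreeSequence x) (h𝔠 : 𝔠 ≤ κ) (hκ : κ ^ ℵ₀ ≤ κ)
    (hX : ∀ A : Set X, A.Countable → HasPseudocharacterLE (closure A) κ) : #X ≤ κ := by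
  unfold HasPseudocharacterLE at hX
  choose! 𝒪 h𝒪κ h𝒪open h𝒪 using hX
  obtain ⟨M, hMclosed, hMκ, hM⟩ := exists_isClosed_mk_le_reflecting_covers h𝔠 hκ h𝒪κ
  suffices M = Set.univ by rwa [this, mk_univ] at hMκ
  refine eq_univ_of_forall fun p ↦ by_contra fun hp ↦ ?_
  have exists_open_notMem (A : Set X) (hA : A ⊆ M ∧ A.Countable) : ∃ U ∈ 𝒪 A, p ∉ U := by
    by_contra! hpU
    have hpA : p ∈ closure A := h𝒪 A hA.2 ▸ mem_sInter.2 hpU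
    exact hp (closure_minimal hA.1 hMclosed hpA)
  choose! g hg𝒪 hpg using exists_open_notMem
  obtain ⟨x, hxM, hx⟩ := exists_seq_notMem_initial_segments hΩ (M := M) (g := g) fun 𝒜 h𝒜 h𝒜M ↦ by
    by_contra! hcover
    have sUnion_eq_univ := hM (g '' 𝒜) (h𝒜.image g)
      (forall_mem_image.2 fun A hA ↦ ⟨A, (h𝒜M A hA).1, (h𝒜M A hA).2, hg𝒪 A (h𝒜M A hA)⟩)
      fun y hy ↦ by simpa using hcover y hy
    obtain ⟨_, ⟨A, hA, rfl⟩, hpA⟩ := sUnion_eq_univ ▸ mem_univ p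
    exact hpg A (h𝒜M A hA) hpA
  have segment (i : Ω) : x '' Iio i ⊆ M ∧ (x '' Iio i).Countable :=
    ⟨image_subset_iff.2 fun j _ ↦ hxM j, ((hΩ i).mono Iio_subset_Iic_self).image x⟩
  refine hfree x (isFreeSequence_of_notMem (fun i ↦ ?_) (fun i ↦ ?_) hx)
  · exact h𝒪open _ (segment i).2 _ (hg𝒪 _ (segment i))
  · exact (h𝒪 _ (segment i).2).symm.subset.trans (sInter_subset_of_mem (hg𝒪 _ (segment i)))

end Pseudocharacter

theorem firstCountable_almostDiscretelyLindelof_card_le_continuum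
    {X : Type u} [TopologicalSpace X] [T3Space X]
    [FirstCountableTopology X]
    (hADL : AlmostDiscretelyLindelof X) :
    #X ≤ 2 ^ (ℵ₀ : Cardinal.{u}) := by
  rw [two_power_aleph0]
  have mk_closure_discrete_le (D : Set X) (hD : DiscreteTopology D) : #(closure D) ≤ 𝔠 := by
    obtain ⟨Y, hDY, hY⟩ := hADL D hD
    have : LindelofSpace Y := isLindelof_iff_lindelofSpace.1 hY
    exact mk_closure_le continuum_power_aleph0.le
      ((mk_le_mk_of_subset hDY).trans mk_le_continuum_of_lindelofSpace)
  obtain ⟨Ω, _, _, _, hΩ⟩ := exists_uncountable_wellOrder_countable_Iic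
  exact mk_le_of_not_isFreeSequence hΩ (hADL.not_isFreeSequence hΩ) le_rfl
    continuum_power_aleph0.le fun A _ ↦
      hasPseudocharacterLE_of_isClosed aleph0_le_continuum mk_closure_discrete_le isClosed_closure
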